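/- For every nonnegative integer n, there exist integers x, y, z such that n = p_5(x) + 3·p_5(y) + 4·p_5(z), where p_5(x) = (3x² − x)/2. In other words, the sum p_5 + 3p_5 + 4p_5 is universal over ℤ. -/

import Mathlib

/-- Generalized pentagonal number: `p₅(x) = (3x² − x)/2`. -/
def p5 (x : ℤ) : ℤ := (3 * x ^ 2 - x) / 2

/-!
Since `24 p₅(x) + 1 = (6x - 1)²`, a representation of `n` amounts to
`24n + 8 = r² + 3s² + 4t²` with `r`, `s`, `t` prime to `6`, and the substitution `r = 2y + z`,
`s = z`, `t = x` turns this into `6n + 2 = x² + y² + yz + z²`.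

Every `M` prime to `3` is of the form `x² + y² + yz + z²`. By Dirichlet's theorem there is a prime
`p = 4eM - 3` with `e ≡ 1 [MOD 12]`, and reciprocity makes `-e` a square modulo `p`, say
`ap = h² + e`. Then `ax² + 2hxy + py² + xz + Mz²` is positive definite with Gram determinant `6`,
and Hermite reduction shows that all such ternary forms are equivalent to `x² + y² + yz + z²`;
it takes the value `M` at `(0, 0, 1)`.

Finally, automorphs of `y² + yz + z²` together with a descent at the prime `2` make `z` prime to
`6`, and for `M = 6n + 2` the remaining conditions hold automatically.
-/

open Module QuadraticMap

section GramMatrix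

variable {R V ι : Type*} [CommRing R] [AddCommGroup V] [Module R V]

/-- The Gram matrix of a family of vectors with respect to a quadratic form. Its entries are values
of the polar form, so that it is integral with even diagonal `2 * Q (v i)` over `ℤ`. -/
def gramMatrix (Q : QuadraticForm R V) (v : ι → V) : Matrix ι ι R :=
  .of fun i j ↦ polar Q (v i) (v j)

theorem gramMatrix_apply (Q : QuadraticForm R V) (v : ι → V) (i j : ι) :
    gramMatrix Q v i j = polar Q (v i) (v j) := rfl

theorem gramMatrix_apply_self (Q : QuadraticForm R V) (v : ι → V) (i : ι) :
    gramMatrix Q v i i = 2 * Q (v i) := by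
  rw [gramMatrix_apply, polar_self, two_nsmul, two_mul]

theorem gramMatrix_isSymm (Q : QuadraticForm R V) (v : ι → V) : (gramMatrix Q v).IsSymm :=
  .ext fun _ _ ↦ polar_comm _ _ _

theorem det_gramMatrix_eq_det_sq_mul [Fintype ι] [DecidableEq ι] (Q : QuadraticForm R V)
    (b c : Basis ι R V) : (gramMatrix Q c).det = b.det c ^ 2 * (gramMatrix Q b).det := by
  have toMatrix_eq (b : Basis ι R V) :
      LinearMap.BilinForm.toMatrix b Q.polarBilin = gramMatrix Q b := by
    ext i j
    simp [gramMatrix_apply]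
  rw [← toMatrix_eq, ← LinearMap.BilinForm.toMatrix_mul_basis_toMatrix b c, toMatrix_eq,
    Matrix.det_mul, Matrix.det_mul, Matrix.det_transpose, b.det_apply]
  ring

theorem det_gramMatrix_int_eq {V : Type*} [AddCommGroup V] [Fintype ι] [DecidableEq ι]
    (Q : QuadraticForm ℤ V) (b c : Basis ι ℤ V) :
    (gramMatrix Q c).det = (gramMatrix Q b).det := by
  rw [det_gramMatrix_eq_det_sq_mul Q b c, pow_two, Int.isUnit_mul_self (b.isUnit_det c), one_mul]

theorem two_mul_apply_sum (Q : QuadraticForm R V) (v : Fin 3 → V) (c : Fin 3 → R) :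
    2 * Q (∑ i, c i • v i) =
      gramMatrix Q v 0 0 * c 0 ^ 2 + gramMatrix Q v 1 1 * c 1 ^ 2 + gramMatrix Q v 2 2 * c 2 ^ 2 +
        2 * (gramMatrix Q v 0 1 * c 0 * c 1 + gramMatrix Q v 0 2 * c 0 * c 2 +
          gramMatrix Q v 1 2 * c 1 * c 2) := by
  rw [two_mul, ← two_nsmul, ← polar_self]
  simp only [gramMatrix_apply, Fin.sum_univ_three, polar_add_left, polar_add_right,
    polar_smul_left, polar_smul_right, smul_eq_mul, polar_comm Q (v 1) (v 0),
    polar_comm Q (v 2) (v 0), polar_comm Q (v 2) (v 1)]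
  ring

/-- The `2 × 2` minor of a ternary Gram matrix on rows `0, i` and columns `0, j`. For `i, j ≠ 0`
these are the entries of the Gram matrix of the projection orthogonal to the first basis vector,
scaled by `G 0 0`. -/
def borderedMinor (G : Matrix (Fin 3) (Fin 3) R) (i j : Fin 3) : R :=
  G 0 0 * G i j - G 0 i * G 0 j

theorem borderedMinor_mul_sub_sq {G : Matrix (Fin 3) (Fin 3) R} (hG : G.IsSymm) :
    borderedMinor G 1 1 * borderedMinor G 2 2 - borderedMinor G 1 2 ^ 2 = G 0 0 * G.det := by
  rw [Matrix.det_fin_three, hG.apply 0 1, hG.apply 0 2, hG.apply 1 2]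
  simp only [borderedMinor]
  ring

theorem exists_basis_coe_eq_of_isUnit_det [Fintype ι] [DecidableEq ι] (b : Basis ι R V) {v : ι → V}
    (hv : IsUnit (b.det v)) : ∃ c : Basis ι R V, ⇑c = v :=
  have ⟨hli, hspan⟩ := b.is_basis_iff_det.mpr hv
  ⟨.mk hli hspan.ge, Basis.coe_mk _ _⟩

theorem exists_basis_unitriangular (b : Basis (Fin 3) R V) (s t u : R) :
    ∃ c : Basis (Fin 3) R V, ⇑c = ![b 0, b 1 + s • b 0, b 2 + t • b 0 + u • b 1] := by
  refine exists_basis_coe_eq_of_isUnit_det b ?_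
  simp [Basis.det_apply, Matrix.det_fin_three, Basis.toMatrix_apply]

theorem exists_basis_gramMatrix_shear (Q : QuadraticForm R V) (b : Basis (Fin 3) R V) (s t u : R) :
    ∃ c : Basis (Fin 3) R V,
      gramMatrix Q c 0 0 = gramMatrix Q b 0 0 ∧
      gramMatrix Q c 0 1 = gramMatrix Q b 0 1 + s * gramMatrix Q b 0 0 ∧
      gramMatrix Q c 0 2 =
        gramMatrix Q b 0 2 + u * gramMatrix Q b 0 1 + t * gramMatrix Q b 0 0 ∧
      borderedMinor (gramMatrix Q c) 1 1 = borderedMinor (gramMatrix Q b) 1 1 ∧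
      borderedMinor (gramMatrix Q c) 1 2 =
        borderedMinor (gramMatrix Q b) 1 2 + u * borderedMinor (gramMatrix Q b) 1 1 := by
  obtain ⟨c, hc⟩ := exists_basis_unitriangular b s t u
  have swap := polar_comm Q (b 1) (b 0)
  refine ⟨c, ?_, ?_, ?_, ?_, ?_⟩
  · simp [gramMatrix_apply, hc]
  · simp [gramMatrix_apply, hc]
  all_goals
    simp only [borderedMinor, gramMatrix_apply, hc, Matrix.cons_val, polar_add_left,
      polar_add_right, polar_smul_left, polar_smul_right, smul_eq_mul, swap]
    ring

end GramMatrix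

section Ordered

variable {R V : Type*} [CommRing R] [LinearOrder R] [IsStrictOrderedRing R]
  [AddCommGroup V] [Module R V] {Q : QuadraticForm R V}

theorem gramMatrix_apply_self_pos {ι : Type*} (hQ : Q.PosDef) (b : Basis ι R V) (i : ι) :
    0 < gramMatrix Q b i i := by
  rw [gramMatrix_apply_self]
  exact mul_pos two_pos (hQ _ (b.ne_zero i))

theorem borderedMinor_gramMatrix_pos (hQ : Q.PosDef) (b : Basis (Fin 3) R V) {i : Fin 3}
    (hi : i ≠ 0) : 0 < borderedMinor (gramMatrix Q b) i i := by
  have hpos := gramMatrix_apply_self_pos hQ b 0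
  set w := gramMatrix Q b 0 0 • b i - gramMatrix Q b 0 i • b 0 with hw
  have hw0 : w ≠ 0 := fun h ↦ hpos.ne' <| by
    simpa [hw, hi.symm, Finsupp.single_apply] using congrArg (b.repr · i) h
  have hQw : 2 * Q w = gramMatrix Q b 0 0 * borderedMinor (gramMatrix Q b) i i := by
    rw [two_mul, ← two_nsmul, ← polar_self]
    simp only [hw, borderedMinor, gramMatrix_apply, polar_sub_left, polar_sub_right,
      polar_smul_left, polar_smul_right, smul_eq_mul, polar_comm Q (b i) (b 0)]
    ring
  exact pos_of_mul_pos_right (hQw ▸ mul_pos two_pos (hQ w hw0)) hpos.le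

theorem posDef_of_gramMatrix_minors_pos (b : Basis (Fin 3) R V) (h₀ : 0 < gramMatrix Q b 0 0)
    (h₁ : 0 < borderedMinor (gramMatrix Q b) 1 1) (h₂ : 0 < (gramMatrix Q b).det) :
    Q.PosDef := by
  intro v hv
  set G := gramMatrix Q b
  set x := b.repr v
  have expand : 2 * Q v = G 0 0 * x 0 ^ 2 + G 1 1 * x 1 ^ 2 + G 2 2 * x 2 ^ 2 +
      2 * (G 0 1 * x 0 * x 1 + G 0 2 * x 0 * x 2 + G 1 2 * x 1 * x 2) := by
    rw [← two_mul_apply_sum, b.sum_repr]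
  have complete_squares : borderedMinor G 1 1 * G 0 0 * (2 * Q v) =
      borderedMinor G 1 1 * (G 0 0 * x 0 + G 0 1 * x 1 + G 0 2 * x 2) ^ 2 +
        (borderedMinor G 1 1 * x 1 + borderedMinor G 1 2 * x 2) ^ 2 + G 0 0 * G.det * x 2 ^ 2 := by
    rw [expand, ← borderedMinor_mul_sub_sq (gramMatrix_isSymm Q b)]
    simp only [borderedMinor]
    ring
  by_contra! hQv
  have hle : borderedMinor G 1 1 * G 0 0 * (2 * Q v) ≤ 0 :=
    mul_nonpos_of_nonneg_of_nonpos (by positivity) (by linarith)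
  have nonneg₀ : 0 ≤ borderedMinor G 1 1 * (G 0 0 * x 0 + G 0 1 * x 1 + G 0 2 * x 2) ^ 2 := by
    positivity
  have nonneg₁ : 0 ≤ (borderedMinor G 1 1 * x 1 + borderedMinor G 1 2 * x 2) ^ 2 := by positivity
  have nonneg₂ : 0 ≤ G 0 0 * G.det * x 2 ^ 2 := by positivity
  have hx₂ : x 2 = 0 := by
    have : G 0 0 * G.det * x 2 ^ 2 = 0 := by linarith
    simpa [h₀.ne', h₂.ne'] using this
  have hx₁ : x 1 = 0 := by
    have : (borderedMinor G 1 1 * x 1 + borderedMinor G 1 2 * x 2) ^ 2 = 0 := by linarith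
    simpa [hx₂, h₁.ne'] using this
  have hx₀ : x 0 = 0 := by
    have : borderedMinor G 1 1 * (G 0 0 * x 0 + G 0 1 * x 1 + G 0 2 * x 2) ^ 2 = 0 := by linarith
    simpa [hx₂, hx₁, h₀.ne', h₁.ne'] using this
  refine hv (b.repr.map_eq_zero_iff.mp (Finsupp.ext fun i ↦ ?_))
  fin_cases i <;> assumption

end Ordered

theorem exists_two_mul_abs_add_mul_le (a : ℤ) {m : ℤ} (hm : 0 < m) :
    ∃ t : ℤ, 2 * |a + t * m| ≤ m := by
  lift m to ℕ using hm.le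
  refine ⟨-a.bdiv m, ?_⟩
  have h := Int.bmod_eq_self_sub_bdiv_mul a m
  have := Int.le_bmod (x := a) (m := m) (by omega)
  have := Int.bmod_le (x := a) (m := m) (by omega)
  rw [neg_mul, ← sub_eq_add_neg, ← h]
  grind

/-- A ternary Gram matrix reduced in the sense of Hermite: the first basis vector is size-reduced
against the others and is no longer than the second, and the binary form obtained by projecting
orthogonally to it (with Gram matrix `borderedMinor G`) is Lagrange-reduced. -/
structure IsHermiteReduced {R : Type*} [CommRing R] [LinearOrder R]
    (G : Matrix (Fin 3) (Fin 3) R) : Prop where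
  two_mul_abs_01_le : 2 * |G 0 1| ≤ G 0 0
  two_mul_abs_02_le : 2 * |G 0 2| ≤ G 0 0
  two_mul_abs_minor_le : 2 * |borderedMinor G 1 2| ≤ borderedMinor G 1 1
  diag_le_diag : G 0 0 ≤ G 1 1
  minor_le : borderedMinor G 1 1 ≤ borderedMinor G 2 2

section HermiteReduced

variable {R : Type*} [CommRing R] [LinearOrder R] [IsStrictOrderedRing R]
  {G : Matrix (Fin 3) (Fin 3) R}

theorem four_mul_sq_le_sq_of_two_mul_abs_le {a b : R} (h : 2 * |a| ≤ b) : 4 * a ^ 2 ≤ b ^ 2 := by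
  calc 4 * a ^ 2 = (2 * |a|) ^ 2 := by rw [mul_pow, sq_abs]; norm_num
    _ ≤ b ^ 2 := by gcongr

theorem IsHermiteReduced.three_mul_diag_sq_le (hG : IsHermiteReduced G) :
    3 * G 0 0 ^ 2 ≤ 4 * borderedMinor G 1 1 := by
  have h01 := four_mul_sq_le_sq_of_two_mul_abs_le hG.two_mul_abs_01_le
  have hpos : 0 ≤ G 0 0 := by linarith [abs_nonneg (G 0 1), hG.two_mul_abs_01_le]
  have := mul_le_mul_of_nonneg_left hG.diag_le_diag hpos
  simp only [borderedMinor]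
  linarith

theorem IsHermiteReduced.three_mul_borderedMinor_sq_le (hG : IsHermiteReduced G) (hs : G.IsSymm) :
    3 * borderedMinor G 1 1 ^ 2 ≤ 4 * (G 0 0 * G.det) := by
  have h12 := four_mul_sq_le_sq_of_two_mul_abs_le hG.two_mul_abs_minor_le
  have hpos : 0 ≤ borderedMinor G 1 1 := by
    linarith [abs_nonneg (borderedMinor G 1 2), hG.two_mul_abs_minor_le]
  have := mul_le_mul_of_nonneg_left hG.minor_le hpos
  rw [← borderedMinor_mul_sub_sq hs]
  linarith

theorem IsHermiteReduced.diag_cube_le_det (hG : IsHermiteReduced G) (hs : G.IsSymm)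
    (hpos : 0 < G 0 0) : 27 * G 0 0 ^ 3 ≤ 64 * G.det := by
  have h : (3 * G 0 0 ^ 2) ^ 2 ≤ (4 * borderedMinor G 1 1) ^ 2 :=
    pow_le_pow_left₀ (by positivity) hG.three_mul_diag_sq_le 2
  have := hG.three_mul_borderedMinor_sq_le hs
  refine le_of_mul_le_mul_left ?_ hpos
  linarith

end HermiteReduced

section Reduction

variable {V : Type*} [AddCommGroup V] {Q : QuadraticForm ℤ V}

theorem exists_basis_minimal (hQ : Q.PosDef) (b₀ : Basis (Fin 3) ℤ V) :
    ∃ b : Basis (Fin 3) ℤ V, ∀ c : Basis (Fin 3) ℤ V,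
      gramMatrix Q b 0 0 ≤ gramMatrix Q c 0 0 ∧ (gramMatrix Q c 0 0 = gramMatrix Q b 0 0 →
        borderedMinor (gramMatrix Q b) 1 1 ≤ borderedMinor (gramMatrix Q c) 1 1) := by
  obtain ⟨b, -, hb⟩ := exists_minimalFor_of_wellFoundedLT (fun _ : Basis (Fin 3) ℤ V ↦ True)
    (fun c ↦ toLex ((gramMatrix Q c 0 0).toNat, (borderedMinor (gramMatrix Q c) 1 1).toNat))
    ⟨b₀, trivial⟩
  refine ⟨b, fun c ↦ ?_⟩
  have hle := (le_total _ _).elim id (hb (j := c) trivial)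
  have h₀ := gramMatrix_apply_self_pos hQ c 0
  have h₁ := borderedMinor_gramMatrix_pos hQ c one_ne_zero
  simp only [Prod.Lex.toLex_le_toLex] at hle
  omega

theorem exists_basis_isHermiteReduced (hQ : Q.PosDef) (b₀ : Basis (Fin 3) ℤ V) :
    ∃ b : Basis (Fin 3) ℤ V, IsHermiteReduced (gramMatrix Q b) := by
  obtain ⟨b, hmin⟩ := exists_basis_minimal hQ b₀
  have h₀ := gramMatrix_apply_self_pos hQ b 0
  have h₁ := borderedMinor_gramMatrix_pos hQ b one_ne_zero
  obtain ⟨s, hs⟩ := exists_two_mul_abs_add_mul_le (gramMatrix Q b 0 1) h₀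
  obtain ⟨u, hu⟩ := exists_two_mul_abs_add_mul_le (borderedMinor (gramMatrix Q b) 1 2) h₁
  obtain ⟨t, ht⟩ := exists_two_mul_abs_add_mul_le (gramMatrix Q b 0 2 + u * gramMatrix Q b 0 1) h₀
  obtain ⟨c, hc00, hc01, hc02, hc11, hc12⟩ := exists_basis_gramMatrix_shear Q b s t u
  refine ⟨c, ?_, ?_, ?_, ?_, ?_⟩
  · rwa [hc01, hc00]
  · rwa [hc02, hc00]
  · rwa [hc12, hc11]
  · have hle := (hmin (c.reindex (Equiv.swap 0 1))).1
    rw [← hc00] at hle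
    simpa only [gramMatrix_apply, Basis.reindex_apply, Equiv.symm_swap, Equiv.swap_apply_left]
      using hle
  · have swap_zero : Equiv.swap (1 : Fin 3) 2 0 = 0 := by decide
    have hle := (hmin (c.reindex (Equiv.swap 1 2))).2
    simp only [gramMatrix_apply, borderedMinor, Basis.reindex_apply, Equiv.symm_swap,
      Equiv.swap_apply_left, swap_zero] at hle hc00 hc11 ⊢
    exact hc11.trans_le (hle hc00)

end Reduction

theorem IsHermiteReduced.entries_of_det_eq_six {G : Matrix (Fin 3) (Fin 3) ℤ}
    (hG : IsHermiteReduced G) (hs : G.IsSymm) (hpos : 0 < G 0 0) (heven : ∀ i, Even (G i i))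
    (hdet : G.det = 6) :
    G 0 0 = 2 ∧ G 1 1 = 2 ∧ |G 0 1| ≤ 1 ∧ |G 0 2| ≤ 1 ∧ |G 1 2| ≤ 1 := by
  have hcube := hG.diag_cube_le_det hs hpos
  have hminor := hG.three_mul_borderedMinor_sq_le hs
  rw [hdet] at hcube hminor
  obtain ⟨h01, h02, h12, hle, -⟩ := hG
  obtain ⟨k₀, hk₀⟩ := heven 0
  obtain ⟨k₁, hk₁⟩ := heven 1
  have h00 : G 0 0 = 2 := by
    have : G 0 0 < 3 := lt_of_pow_lt_pow_left₀ 3 (by norm_num) (by linarith)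
    omega
  have hS : borderedMinor G 1 1 ≤ 4 := by
    rw [h00] at hminor
    nlinarith
  have hx : |G 0 1| ≤ 1 := by omega
  have hy : |G 0 2| ≤ 1 := by omega
  have h11 : G 1 1 = 2 := by
    have : G 0 1 * G 0 1 ≤ 1 := by nlinarith [abs_mul_abs_self (G 0 1), abs_nonneg (G 0 1)]
    rw [borderedMinor] at hS
    grind
  have hz : |G 1 2| ≤ 1 := by
    have : |2 * G 1 2 - G 0 1 * G 0 2| ≤ 2 := by rw [borderedMinor, h00] at h12; omega
    have : |G 0 1 * G 0 2| ≤ 1 := by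
      rw [abs_mul]
      exact mul_le_one₀ hx (abs_nonneg _) hy
    grind
  exact ⟨h00, h11, hx, hy, hz⟩

theorem IsHermiteReduced.diag_and_sum_sq_of_det_eq_six {G : Matrix (Fin 3) (Fin 3) ℤ}
    (hG : IsHermiteReduced G) (hs : G.IsSymm) (hpos : 0 < G 0 0) (heven : ∀ i, Even (G i i))
    (hdet : G.det = 6) :
    (∀ i, G i i = 2) ∧ G 0 1 ^ 2 + G 0 2 ^ 2 + G 1 2 ^ 2 = 1 := by
  obtain ⟨h00, h11, hx, hy, hz⟩ := hG.entries_of_det_eq_six hs hpos heven hdet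
  have h12 := hG.two_mul_abs_minor_le
  obtain ⟨k, hk⟩ := heven 2
  suffices G 2 2 = 2 ∧ G 0 1 ^ 2 + G 0 2 ^ 2 + G 1 2 ^ 2 = 1 by
    simpa [Fin.forall_fin_succ, h00, h11] using this
  simp only [Matrix.det_fin_three, hs.apply 0 1, hs.apply 0 2, hs.apply 1 2, h00, h11] at hdet
  simp only [borderedMinor, h00, h11] at h12
  clear * - hx hy hz h12 hdet hk
  generalize G 0 1 = x, G 0 2 = y, G 1 2 = z, G 2 2 = w at *
  obtain ⟨hx₁, hx₂⟩ := abs_le.mp hx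
  obtain ⟨hy₁, hy₂⟩ := abs_le.mp hy
  obtain ⟨hz₁, hz₂⟩ := abs_le.mp hz
  interval_cases x <;> interval_cases y <;> interval_cases z <;> grind

theorem cases_of_sq_add_sq_add_sq_eq_one {x y z : ℤ} (h : x ^ 2 + y ^ 2 + z ^ 2 = 1) :
    x ^ 2 = 1 ∧ y = 0 ∧ z = 0 ∨ x = 0 ∧ y ^ 2 = 1 ∧ z = 0 ∨ x = 0 ∧ y = 0 ∧ z ^ 2 = 1 := by
  have hx := sq_nonneg x
  have hy := sq_nonneg y
  have hz := sq_nonneg z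
  simp only [← sq_eq_zero_iff (a := x), ← sq_eq_zero_iff (a := y), ← sq_eq_zero_iff (a := z)]
  omega

/-- The norm form of the Eisenstein integers, whose values are the Loeschian numbers. -/
def loeschian (y z : ℤ) : ℤ := y ^ 2 + y * z + z ^ 2

theorem loeschian_comm (y z : ℤ) : loeschian y z = loeschian z y := by
  simp only [loeschian]
  ring

theorem loeschian_neg_add (y z : ℤ) : loeschian (-y) (y + z) = loeschian y z := by
  simp only [loeschian]
  ring

theorem loeschian_mul_mul (k y z : ℤ) : loeschian (k * y) (k * z) = k ^ 2 * loeschian y z := by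
  simp only [loeschian]
  ring

theorem exists_apply_eq_sq_add_loeschian_of_det_eq_six {V : Type*} [AddCommGroup V]
    {Q : QuadraticForm ℤ V} (hQ : Q.PosDef) (b₀ : Basis (Fin 3) ℤ V)
    (hdet : (gramMatrix Q b₀).det = 6) (v : V) :
    ∃ x y z : ℤ, Q v = x ^ 2 + loeschian y z := by
  obtain ⟨b, hb⟩ := exists_basis_isHermiteReduced hQ b₀
  obtain ⟨hdiag, hoff⟩ := hb.diag_and_sum_sq_of_det_eq_six (gramMatrix_isSymm Q b)
    (gramMatrix_apply_self_pos hQ b 0) (fun i ↦ gramMatrix_apply_self Q b i ▸ even_two_mul _)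
    (det_gramMatrix_int_eq Q b₀ b ▸ hdet)
  set c := b.repr v
  have expand : Q v = c 0 ^ 2 + c 1 ^ 2 + c 2 ^ 2 + (gramMatrix Q b 0 1 * c 0 * c 1 +
      gramMatrix Q b 0 2 * c 0 * c 2 + gramMatrix Q b 1 2 * c 1 * c 2) := by
    have := two_mul_apply_sum Q b c
    rw [b.sum_repr, hdiag, hdiag, hdiag] at this
    linarith
  simp only [loeschian]
  obtain ⟨h01, h02, h12⟩ | ⟨h01, h02, h12⟩ | ⟨h01, h02, h12⟩ :=
    cases_of_sq_add_sq_add_sq_eq_one hoff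
  · refine ⟨c 2, c 0, gramMatrix Q b 0 1 * c 1, ?_⟩
    linear_combination expand - c 1 ^ 2 * h01 + c 0 * c 2 * h02 + c 1 * c 2 * h12
  · refine ⟨c 1, c 0, gramMatrix Q b 0 2 * c 2, ?_⟩
    linear_combination expand + c 0 * c 1 * h01 - c 2 ^ 2 * h02 + c 1 * c 2 * h12
  · refine ⟨c 0, c 1, gramMatrix Q b 1 2 * c 2, ?_⟩
    linear_combination expand + c 0 * c 1 * h01 + c 0 * c 2 * h02 - c 2 ^ 2 * h12

theorem gramMatrix_toQuadraticForm' {R n : Type*} [CommRing R] [Fintype n] [DecidableEq n]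
    (A : Matrix n n R) :
    gramMatrix A.toQuadraticForm' (Pi.basisFun R n) = A + A.transpose := by
  ext i j
  simp [gramMatrix_apply, Matrix.toQuadraticForm', LinearMap.BilinMap.polar_toQuadraticMap,
    Matrix.toLinearMap₂'_apply']

theorem exists_eq_sq_add_loeschian_of_mul_eq {a e h p M : ℤ} (he : 0 < e) (hp : 0 < p)
    (hap : a * p = h ^ 2 + e) (hM : p + 3 = 4 * e * M) :
    ∃ x y z : ℤ, M = x ^ 2 + loeschian y z := by
  have ha : 0 < a := pos_of_mul_pos_left (hap ▸ by positivity) hp.le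
  let A : Matrix (Fin 3) (Fin 3) ℤ := !![a, 2 * h, 1; 0, p, 0; 0, 0, M]
  let b := Pi.basisFun ℤ (Fin 3)
  have gram : gramMatrix A.toQuadraticForm' b =
      !![2 * a, 2 * h, 1; 2 * h, 2 * p, 0; 1, 0, 2 * M] := by
    rw [gramMatrix_toQuadraticForm']
    ext i j
    fin_cases i <;> fin_cases j <;> simp [A, two_mul]
  have hdet : (gramMatrix A.toQuadraticForm' b).det = 6 := by
    calc (gramMatrix A.toQuadraticForm' b).det = 8 * M * (a * p - h ^ 2) - 2 * p := by
          simp only [gram, Matrix.det_fin_three, Matrix.of_apply, Matrix.cons_val]; ring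
      _ = 6 := by linear_combination 8 * M * hap - 2 * hM
  have hminor : borderedMinor (gramMatrix A.toQuadraticForm' b) 1 1 = 4 * e := by
    calc borderedMinor (gramMatrix A.toQuadraticForm' b) 1 1
        = 2 * a * (2 * p) - 2 * h * (2 * h) := by rw [gram]; rfl
      _ = 4 * e := by linear_combination 4 * hap
  have hQ : A.toQuadraticForm'.PosDef :=
    posDef_of_gramMatrix_minors_pos b (by simp [gram, ha]) (by simp [hminor, he]) (by simp [hdet])
  have hval : A.toQuadraticForm' (Pi.single 2 1) = M := by
    simp [A, Matrix.toQuadraticForm', Matrix.toLinearMap₂'_apply']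
  exact hval ▸ exists_apply_eq_sq_add_loeschian_of_det_eq_six hQ b hdet _

theorem exists_prime_add_three_eq {M : ℕ} (hM : ¬ 3 ∣ M) :
    ∃ p e : ℕ, p.Prime ∧ e % 12 = 1 ∧ p + 3 = 4 * e * M := by
  have hM₀ : M ≠ 0 := by rintro rfl; simp at hM
  have hcop3 : IsCoprime (M : ℤ) 3 := by
    exact_mod_cast ((Nat.Prime.coprime_iff_not_dvd Nat.prime_three).mpr hM).symm.isCoprime
  have hcop : IsCoprime (4 * M - 3 : ℤ) ((48 * M : ℕ) : ℤ) := by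
    have h2 : IsCoprime (4 * M - 3 : ℤ) 2 := ⟨-1, 2 * M - 1, by ring⟩
    have h3 : IsCoprime (4 * M - 3 : ℤ) 3 := by
      have h4 : IsCoprime (4 : ℤ) 3 := ⟨1, -1, by norm_num⟩
      simpa [sub_eq_add_neg] using (h4.mul_left hcop3).add_mul_left_left (-1)
    have hM : IsCoprime (4 * M - 3 : ℤ) M := by
      have := hcop3.symm.neg_left.add_mul_right_left 4
      rwa [neg_add_eq_sub] at this
    have : ((48 * M : ℕ) : ℤ) = 2 ^ 4 * 3 * M := by push_cast; ring
    exact this ▸ (h2.pow_right.mul_right h3).mul_right hM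
  obtain ⟨p, hlt, hp, hmod⟩ := Nat.forall_exists_prime_gt_and_zmodEq (4 * M) (by omega) hcop
  obtain ⟨k, hk⟩ := hmod.symm.dvd
  push_cast at hk
  have hk₀ : 0 < 12 * k + 1 := by
    refine pos_of_mul_pos_right (a := (M : ℤ)) ?_ (by positivity)
    linarith
  refine ⟨p, (12 * k + 1).toNat, hp, by omega, ?_⟩
  zify
  rw [Int.toNat_of_nonneg hk₀.le]
  linarith

theorem jacobiSym_neg_three {e : ℕ} (he : e % 12 = 1) : jacobiSym (-3) e = 1 := by
  have hodd : Odd e := Nat.odd_iff.mpr (by omega)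
  rw [jacobiSym.neg 3 hodd, ZMod.χ₄_nat_one_mod_four (by omega), one_mul,
    show (3 : ℤ) = (3 : ℕ) from rfl,
    jacobiSym.quadratic_reciprocity_one_mod_four' (by decide) (by omega), jacobiSym.mod_left,
    show (e : ℤ) % (3 : ℕ) = 1 by omega, jacobiSym.one_left]

theorem isSquare_neg_natCast_of_add_three_eq {p e M : ℕ} [Fact p.Prime] (he : e % 12 = 1)
    (hp : p + 3 = 4 * e * M) : IsSquare (-e : ZMod p) := by
  have hp4 : p % 4 = 1 := by rw [mul_assoc] at hp; omega
  have hodd : Odd p := Nat.odd_iff.mpr (by omega)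
  have hmod : (p : ℤ) % e = -3 % e := by
    refine Int.ModEq.symm ((Int.modEq_iff_dvd).mpr ⟨4 * M, ?_⟩)
    zify at hp
    linarith
  have hJ : jacobiSym (-e) p = 1 := by
    calc jacobiSym (-e) p = jacobiSym e p := by
          rw [jacobiSym.neg _ hodd, ZMod.χ₄_nat_one_mod_four hp4, one_mul]
      _ = jacobiSym p e := jacobiSym.quadratic_reciprocity_one_mod_four (by omega) hodd
      _ = jacobiSym (-3) e := jacobiSym.mod_left' hmod
      _ = 1 := jacobiSym_neg_three he
  exact_mod_cast ZMod.isSquare_of_jacobiSym_eq_one hJ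

theorem exists_eq_sq_add_loeschian_of_not_three_dvd {M : ℕ} (hM : ¬ 3 ∣ M) :
    ∃ x y z : ℤ, (M : ℤ) = x ^ 2 + loeschian y z := by
  obtain ⟨p, e, hp, he, hpM⟩ := exists_prime_add_three_eq hM
  have : Fact p.Prime := ⟨hp⟩
  obtain ⟨r, hr⟩ := isSquare_neg_natCast_of_add_three_eq he hpM
  obtain ⟨h, rfl⟩ := ZMod.intCast_surjective r
  have hdvd : (p : ℤ) ∣ h ^ 2 + e := by
    rw [← ZMod.intCast_zmod_eq_zero_iff_dvd]
    push_cast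
    linear_combination -hr
  obtain ⟨a, ha⟩ := hdvd
  exact exists_eq_sq_add_loeschian_of_mul_eq (a := a) (e := e) (h := h) (p := p) (by omega)
    (mod_cast hp.pos) (by rw [mul_comm, ha]) (mod_cast hpM)

theorem exists_even_loeschian_eq (y z : ℤ) :
    ∃ u w : ℤ, Even w ∧ loeschian y z = loeschian u w := by
  obtain hz | hz := z.even_or_odd
  · exact ⟨y, z, hz, rfl⟩
  obtain hy | hy := y.even_or_odd
  · exact ⟨z, y, hy, loeschian_comm y z⟩
  · exact ⟨-y, y + z, hy.add_odd hz, (loeschian_neg_add y z).symm⟩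

theorem exists_odd_eq_sq_add_loeschian {M : ℕ} (hM : M ≠ 0)
    (h : ∃ x y z : ℤ, (M : ℤ) = x ^ 2 + loeschian y z) :
    ∃ x y z : ℤ, Odd z ∧ (M : ℤ) = x ^ 2 + loeschian y z := by
  induction M using Nat.strong_induction_on with
  | _ M ih =>
  obtain ⟨x, y, z, hxyz⟩ := h
  obtain hz | hz := z.even_or_odd
  swap
  · exact ⟨x, y, z, hz, hxyz⟩
  obtain hy | hy := y.even_or_odd
  swap
  · exact ⟨x, z, y, hy, loeschian_comm y z ▸ hxyz⟩
  -- As `4 * loeschian u v = (2 * u + v) ^ 2 + 3 * v ^ 2`, squares from the two summands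
  -- can be exchanged.
  obtain ⟨u, rfl⟩ := hy.two_dvd
  obtain ⟨v, rfl⟩ := hz.two_dvd
  rw [loeschian_mul_mul] at hxyz
  obtain hx | hx := x.even_or_odd
  · obtain ⟨t, rfl⟩ := hx.two_dvd
    obtain ⟨m, rfl⟩ : 4 ∣ M := by
      zify
      exact ⟨t ^ 2 + loeschian u v, by linear_combination hxyz⟩
    obtain ⟨t', u', v', hv', h'⟩ := ih m (by omega) (by omega) ⟨t, u, v, by grind⟩
    refine ⟨2 * u' + v', 2 * v', 2 * t' - v', (even_two_mul t').sub_odd hv', ?_⟩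
    push_cast
    simp only [loeschian] at h' ⊢
    linear_combination 4 * h'
  · obtain ⟨u', w, hw, h'⟩ := exists_even_loeschian_eq u v
    obtain ⟨w, rfl⟩ := hw.two_dvd
    refine ⟨2 * (u' + w), 4 * w, x - 2 * w, hx.sub_even (even_two_mul w), ?_⟩
    simp only [loeschian] at hxyz h' ⊢
    linear_combination hxyz + 4 * h'

theorem sq_emod_three_eq_ite (a : ℤ) : a ^ 2 % 3 = if 3 ∣ a then 0 else 1 := by
  obtain h | h | h : a % 3 = 0 ∨ a % 3 = 1 ∨ a % 3 = 2 := by omega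
  all_goals simp [pow_two, Int.mul_emod, h, Int.dvd_iff_emod_eq_zero]

theorem exists_odd_not_three_dvd_eq_sq_add_loeschian {M : ℕ} (hM : M % 3 = 2) :
    ∃ x y z : ℤ, Odd z ∧ ¬ 3 ∣ z ∧ (M : ℤ) = x ^ 2 + loeschian y z := by
  obtain ⟨x, y, z, hz, hxyz⟩ :=
    exists_odd_eq_sq_add_loeschian (by omega)
      (exists_eq_sq_add_loeschian_of_not_three_dvd (M := M) (by omega))
  by_cases hz₃ : 3 ∣ z
  swap
  · exact ⟨x, y, z, hz, hz₃, hxyz⟩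
  have hy₃ : ¬ 3 ∣ y := by
    rintro ⟨k, rfl⟩
    obtain ⟨l, rfl⟩ := hz₃
    rw [loeschian_mul_mul] at hxyz
    have : M = x ^ 2 + 3 * (3 * loeschian k l) := by linear_combination hxyz
    have hx := sq_emod_three_eq_ite x
    split_ifs at hx <;> omega
  obtain hy | hy := y.even_or_odd
  · exact ⟨x, -y, y + z, hy.add_odd hz, by omega, (loeschian_neg_add y z).symm ▸ hxyz⟩
  · exact ⟨x, z, y, hy, hy₃, loeschian_comm y z ▸ hxyz⟩

theorem exists_odd_not_three_dvd_sq_add (n : ℕ) :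
    ∃ r s t : ℤ, (Odd r ∧ ¬ 3 ∣ r) ∧ (Odd s ∧ ¬ 3 ∣ s) ∧ (Odd t ∧ ¬ 3 ∣ t) ∧
      24 * n + 8 = r ^ 2 + 3 * s ^ 2 + 4 * t ^ 2 := by
  obtain ⟨x, y, z, hz, hz₃, h⟩ :=
    exists_odd_not_three_dvd_eq_sq_add_loeschian (M := 6 * n + 2) (by omega)
  push_cast [loeschian] at h
  have hsum : (24 * n + 8 : ℤ) = (2 * y + z) ^ 2 + 3 * z ^ 2 + 4 * x ^ 2 := by
    linear_combination 4 * h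
  have hx : Odd x := by
    have : Even (x ^ 2 + (y ^ 2 + y * z + z ^ 2)) := h ▸ ⟨3 * n + 1, by ring⟩
    have hyz : ¬ Even z := Int.not_even_iff_odd.mpr hz
    simp only [Int.even_add, Int.even_mul, Int.even_pow' two_ne_zero] at this
    rw [← Int.not_even_iff_odd]
    tauto
  have hmod₁ := sq_emod_three_eq_ite (2 * y + z)
  have hmod₂ := sq_emod_three_eq_ite x
  refine ⟨2 * y + z, z, x, ⟨(even_two_mul y).add_odd hz, ?_⟩, ⟨hz, hz₃⟩, ⟨hx, ?_⟩, hsum⟩ <;>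
    split_ifs at hmod₁ hmod₂ <;> omega

theorem twentyfour_mul_p5_add_one (x : ℤ) : 24 * p5 x + 1 = (6 * x - 1) ^ 2 := by
  have hdvd : 2 ∣ 3 * x ^ 2 - x := by
    have : ¬ Even (3 : ℤ) := by decide
    simp [← even_iff_two_dvd, Int.even_sub, Int.even_mul, Int.even_pow' two_ne_zero, this]
  have : 2 * p5 x = 3 * x ^ 2 - x := Int.mul_ediv_cancel' hdvd
  linear_combination 12 * this

theorem exists_sq_eq_p5_of_odd {t : ℤ} (ht : Odd t) (ht₃ : ¬ 3 ∣ t) :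
    ∃ x : ℤ, t ^ 2 = 24 * p5 x + 1 := by
  simp only [twentyfour_mul_p5_add_one, sq_eq_sq_iff_eq_or_eq_neg]
  obtain h | h : t % 6 = 1 ∨ t % 6 = 5 := by grind
  · exact ⟨-(t / 6), by omega⟩
  · exact ⟨t / 6 + 1, by omega⟩

theorem p5_add_3p5_add_4p5_universal (n : ℕ) :
    ∃ x y z : ℤ, (n : ℤ) = p5 x + 3 * p5 y + 4 * p5 z := by
  obtain ⟨r, s, t, ⟨hr, hr₃⟩, ⟨hs, hs₃⟩, ⟨ht, ht₃⟩, h⟩ := exists_odd_not_three_dvd_sq_add n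
  obtain ⟨x, hx⟩ := exists_sq_eq_p5_of_odd hr hr₃
  obtain ⟨y, hy⟩ := exists_sq_eq_p5_of_odd hs hs₃
  obtain ⟨z, hz⟩ := exists_sq_eq_p5_of_odd ht ht₃
  exact ⟨x, y, z, by linarith⟩
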